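/- There exists a subset of ω^ω which is m-measurable but not cl-measurable, and there exists a subset of ω^ω which is s-measurable but not cl-measurable. -/

import Mathlib

open Cardinal Set

/-- A tree on ω: a nonempty set of finite sequences closed under initial segments. -/
def IsTree (T : Set (List ℕ)) : Prop :=
  T.Nonempty ∧ ∀ s ∈ T, ∀ n : ℕ, s.take n ∈ T

/-- The body of a tree: all infinite branches. -/
def treeBody (T : Set (List ℕ)) : Set (ℕ → ℕ) :=
  {x | ∀ n : ℕ, (List.ofFn fun i : Fin n => x i) ∈ T}

/-- Immediate successors of a node in a tree. -/
def succs (T : Set (List ℕ)) (t : List ℕ) : Set ℕ := {n | t ++ [n] ∈ T}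

/-- Sacks (perfect) tree: every node has an extension with at least two immediate successors. -/
def IsSacksTree (T : Set (List ℕ)) : Prop :=
  IsTree T ∧ ∀ s ∈ T, ∃ t ∈ T, s <+: t ∧ (succs T t).Nontrivial

/-- Miller tree: every node has an extension with infinitely many immediate successors. -/
def IsMillerTree (T : Set (List ℕ)) : Prop :=
  IsTree T ∧ ∀ s ∈ T, ∃ t ∈ T, s <+: t ∧ (succs T t).Infinite

/-- Laver tree: has a stem (a node comparable with every node) such that every node
extending the stem has infinitely many immediate successors. -/
def IsLaverTree (T : Set (List ℕ)) : Prop :=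
  IsTree T ∧ ∃ s ∈ T, (∀ t ∈ T, s <+: t ∨ t <+: s) ∧
    ∀ t ∈ T, s <+: t → (succs T t).Infinite

/-- Complete Laver tree: every node has infinitely many immediate successors. -/
def IsCompleteLaverTree (T : Set (List ℕ)) : Prop :=
  IsTree T ∧ ∀ t ∈ T, (succs T t).Infinite

/-- The tree ideal t₀ associated with a family of trees 𝕋. -/
def treeIdeal (𝕋 : Set (Set (List ℕ))) : Set (Set (ℕ → ℕ)) :=
  {A | ∀ P ∈ 𝕋, ∃ Q ∈ 𝕋, Q ⊆ P ∧ treeBody Q ∩ A = ∅}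

/-- t-measurability with respect to a family of trees 𝕋. -/
def TMeasurable (𝕋 : Set (Set (List ℕ))) (A : Set (ℕ → ℕ)) : Prop :=
  ∀ P ∈ 𝕋, ∃ Q ∈ 𝕋, Q ⊆ P ∧ (treeBody Q ⊆ A ∨ treeBody Q ∩ A = ∅)

/-- 𝕋-Bernstein set: meets and omits the body of every tree in 𝕋. -/
def TBernstein (𝕋 : Set (Set (List ℕ))) (B : Set (ℕ → ℕ)) : Prop :=
  ∀ T ∈ 𝕋, (B ∩ treeBody T).Nonempty ∧ (B \ treeBody T).Nonempty

/-!
Every complete Laver tree `T` contains a coding set: a perfect set of branches any two of which, by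
the signs of the differences of their entries, encode the tree `T`. Since a pair of branches
determines `T`, coding sets of different trees share at most one point. Call a tree harmless if its
body meets every coding set in a countable set. A transfinite recursion of length `𝔠` picks a point
of each coding set outside all coding sets and harmless bodies listed earlier. The set `A` of these
points meets every coding set, and it meets every coding set and every harmless body in fewer than
`𝔠` points. Hence it meets, but does not contain, the body of each complete Laver tree.

A Sacks tree either is harmless or contains an uncountable part of some coding set, so some closed
uncountable subset of its body meets `A` in fewer than `𝔠` points. A Miller tree can be thinned out
so that diverging branches differ enormously where they part; the entries in a coding set grow
simultaneously, so such a tree is harmless. Finally, a copy of `2^ω` or `ω^ω` splits into `𝔠`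
disjoint bodies of Sacks or Miller trees by prescribing the even directions, and a set with fewer
than `𝔠` points misses one of them.
-/

open PiNat Topology Filter

universe u

/-- The finite sequence `(x 0, …, x (n - 1))`; `treeBody` is written in terms of it. -/
def initSeg (x : ℕ → ℕ) (n : ℕ) : List ℕ := List.ofFn fun i : Fin n ↦ x i

@[simp]
theorem length_initSeg (x : ℕ → ℕ) (n : ℕ) : (initSeg x n).length = n := List.length_ofFn

theorem initSeg_succ (x : ℕ → ℕ) (n : ℕ) : initSeg x (n + 1) = initSeg x n ++ [x n] := by
  rw [initSeg, List.ofFn_succ_last]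
  rfl

theorem take_initSeg (x : ℕ → ℕ) (m n : ℕ) : (initSeg x n).take m = initSeg x (min m n) :=
  List.ext_getElem (by simp) (by simp [initSeg])

theorem initSeg_prefix (x : ℕ → ℕ) {m n : ℕ} (hmn : m ≤ n) : initSeg x m <+: initSeg x n := by
  rw [← min_eq_left hmn, ← take_initSeg]
  exact List.take_prefix m _

theorem initSeg_eq_initSeg {x y : ℕ → ℕ} {n : ℕ} :
    initSeg y n = initSeg x n ↔ y ∈ cylinder x n := by
  simp [initSeg, List.ofFn_inj, funext_iff, Fin.forall_iff]

theorem mem_treeBody {T : Set (List ℕ)} {x : ℕ → ℕ} : x ∈ treeBody T ↔ ∀ n, initSeg x n ∈ T :=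
  Iff.rfl

theorem IsTree.mem_of_prefix {T : Set (List ℕ)} (hT : IsTree T) {s t : List ℕ} (hst : s <+: t)
    (ht : t ∈ T) : s ∈ T := by
  rw [List.prefix_iff_eq_take.1 hst]
  exact hT.2 t ht _

theorem IsTree.nil_mem {T : Set (List ℕ)} (hT : IsTree T) : [] ∈ T :=
  let ⟨_, hs⟩ := hT.1
  hT.mem_of_prefix List.nil_prefix hs

theorem hasBasis_nhds_cylinder {β : Type*} [TopologicalSpace β] [DiscreteTopology β]
    (x : ℕ → β) : (𝓝 x).HasBasis (fun _ ↦ True) (cylinder x) := by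
  refine ⟨fun U ↦ ?_⟩
  rw [(isTopologicalBasis_cylinders fun _ ↦ β).mem_nhds_iff]
  constructor
  · rintro ⟨_, ⟨y, n, rfl⟩, hx, hU⟩
    exact ⟨n, trivial, mem_cylinder_iff_eq.1 hx ▸ hU⟩
  · rintro ⟨n, -, hU⟩
    exact ⟨_, ⟨x, n, rfl⟩, self_mem_cylinder x n, hU⟩

theorem mem_closure_iff_cylinder {C : Set (ℕ → ℕ)} {x : ℕ → ℕ} :
    x ∈ closure C ↔ ∀ n, ∃ y ∈ C, y ∈ cylinder x n := by
  simp [mem_closure_iff_nhds_basis (hasBasis_nhds_cylinder x)]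

theorem isClosed_treeBody (T : Set (List ℕ)) : IsClosed (treeBody T) := by
  refine isClosed_of_closure_subset fun x hx ↦ mem_treeBody.2 fun n ↦ ?_
  obtain ⟨y, hy, hyx⟩ := mem_closure_iff_cylinder.1 hx n
  exact initSeg_eq_initSeg.2 hyx ▸ hy n

/-- The tree of all initial segments of members of `C`, whose body is the closure of `C`. -/
def initSegTree (C : Set (ℕ → ℕ)) : Set (List ℕ) := {s | ∃ x ∈ C, ∃ n, initSeg x n = s}

theorem isTree_initSegTree {C : Set (ℕ → ℕ)} (hC : C.Nonempty) : IsTree (initSegTree C) := by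
  obtain ⟨x, hx⟩ := hC
  refine ⟨⟨_, x, hx, 0, rfl⟩, ?_⟩
  rintro _ ⟨y, hy, n, rfl⟩ m
  exact ⟨y, hy, min m n, (take_initSeg y m n).symm⟩

theorem treeBody_initSegTree (C : Set (ℕ → ℕ)) : treeBody (initSegTree C) = closure C := by
  ext x
  rw [mem_treeBody, mem_closure_iff_cylinder]
  refine forall_congr' fun n ↦ ⟨?_, fun ⟨y, hy, hyx⟩ ↦ ⟨y, hy, n, initSeg_eq_initSeg.2 hyx⟩⟩
  rintro ⟨y, hy, m, hym⟩
  obtain rfl : m = n := by simpa using congrArg List.length hym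
  exact ⟨y, hy, initSeg_eq_initSeg.1 hym⟩

theorem initSegTree_subset {C : Set (ℕ → ℕ)} {T : Set (List ℕ)} (hC : C ⊆ treeBody T) :
    initSegTree C ⊆ T := by
  rintro _ ⟨x, hx, n, rfl⟩
  exact hC hx n

theorem isSacksTree_initSegTree {C : Set (ℕ → ℕ)} (hne : C.Nonempty) (hC : Preperfect C) :
    IsSacksTree (initSegTree C) := by
  refine ⟨isTree_initSegTree hne, ?_⟩
  rintro _ ⟨x, hx, n, rfl⟩
  obtain ⟨y, ⟨hyx, hy⟩, hne⟩ :=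
    preperfect_iff_nhds.1 hC x hx _ ((hasBasis_nhds_cylinder x).mem_of_mem (i := n) trivial)
  have hn : n ≤ firstDiff y x := (mem_cylinder_iff_le_firstDiff hne n).1 hyx
  refine ⟨initSeg x (firstDiff y x), ⟨x, hx, _, rfl⟩, initSeg_prefix x hn,
    y (firstDiff y x), ⟨y, hy, firstDiff y x + 1, ?_⟩,
    x (firstDiff y x), ⟨x, hx, _, initSeg_succ x _⟩, apply_firstDiff_ne hne⟩
  rw [initSeg_succ, initSeg_eq_initSeg.2 (mem_cylinder_firstDiff y x)]

theorem preperfect_image {X Y : Type*} [TopologicalSpace X] [TopologicalSpace Y] {f : X → Y}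
    (hf : Continuous f) (hinj : Function.Injective f) {C : Set X} (hC : Preperfect C) :
    Preperfect (f '' C) := by
  rw [preperfect_iff_nhds] at hC ⊢
  rintro _ ⟨x, hx, rfl⟩ U hU
  obtain ⟨y, ⟨hyU, hyC⟩, hyx⟩ := hC x hx _ (hf.continuousAt hU)
  exact ⟨f y, ⟨hyU, mem_image_of_mem f hyC⟩, hinj.ne hyx⟩

section EvenFiber

variable {β : Type*}

/-- The sequences whose entries at even places are prescribed by `r`. For varying `r` these sets
partition `ℕ → β`; the entries at odd places remain free, so each of them is as rich as `ℕ → β`. -/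
def evenFiber (r : ℕ → β) : Set (ℕ → β) := {z | ∀ n, z (2 * n) = r n}

theorem evenFiber_nonempty (r : ℕ → β) : (evenFiber r).Nonempty :=
  ⟨fun n ↦ r (n / 2), fun n ↦ by simp⟩

theorem update_mem_evenFiber {r z : ℕ → β} (hz : z ∈ evenFiber r) (n : ℕ) (b : β) :
    Function.update z (2 * n + 1) b ∈ evenFiber r := fun m ↦ by
  rw [Function.update_of_ne (by omega), hz m]

variable [TopologicalSpace β] [DiscreteTopology β]

theorem isClosed_evenFiber (r : ℕ → β) : IsClosed (evenFiber r) := by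
  simp only [evenFiber, Set.ofPred_forall]
  exact isClosed_iInter fun n ↦ isClosed_eq (continuous_apply _) continuous_const

theorem preperfect_evenFiber [Nontrivial β] (r : ℕ → β) : Preperfect (evenFiber r) := by
  refine preperfect_iff_nhds.2 fun z hz U hU ↦ ?_
  obtain ⟨n, -, hnU⟩ := (hasBasis_nhds_cylinder z).mem_iff.1 hU
  obtain ⟨b, hb⟩ := exists_ne (z (2 * n + 1))
  have hcyl : Function.update z (2 * n + 1) b ∈ cylinder z n :=
    cylinder_anti z (by omega : n ≤ 2 * n + 1) (update_mem_cylinder z _ b)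
  exact ⟨_, ⟨hnU hcyl, update_mem_evenFiber hz n b⟩, Function.update_ne_self_iff.2 hb⟩

end EvenFiber

theorem exists_disjoint_image_evenFiber {β X : Type u} {f : (ℕ → β) → X}
    (hf : Function.Injective f) {A : Set X} (hA : #(A ∩ range f : Set X) < #(ℕ → β)) :
    ∃ r, Disjoint (f '' evenFiber r) A := by
  by_contra! hmeet
  simp only [Set.not_disjoint_iff, exists_mem_image] at hmeet
  choose z hz hzA using hmeet
  have hzinj : Function.Injective z := fun r r' h ↦ by
    funext n
    rw [← hz r n, h, hz r' n]
  let g : (ℕ → β) → (A ∩ range f : Set X) := fun r ↦ ⟨f (z r), hzA r, mem_range_self _⟩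
  have hg : Function.Injective g := fun r r' h ↦ hzinj (hf (congrArg Subtype.val h))
  exact hA.not_ge (mk_le_of_injective hg)

theorem exists_isSacksTree_disjoint {A C : Set (ℕ → ℕ)} {P : Set (List ℕ)} (hC : IsClosed C)
    (hunc : ¬ C.Countable) (hCP : C ⊆ treeBody P) (hA : #(A ∩ C : Set (ℕ → ℕ)) < 𝔠) :
    ∃ Q, IsSacksTree Q ∧ Q ⊆ P ∧ Disjoint (treeBody Q) A := by
  obtain ⟨f, hfC, hf, hinj⟩ := hC.exists_nat_bool_injection_of_not_countable hunc
  have hAf : #(A ∩ range f : Set (ℕ → ℕ)) < #(ℕ → Bool) := by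
    simpa using (mk_le_mk_of_subset (inter_subset_inter_right A hfC)).trans_lt hA
  obtain ⟨r, hr⟩ := exists_disjoint_image_evenFiber hinj hAf
  refine ⟨_, isSacksTree_initSegTree ((evenFiber_nonempty r).image f)
    (preperfect_image hf hinj (preperfect_evenFiber r)), initSegTree_subset ?_, ?_⟩
  · exact (image_subset_range f _).trans (hfC.trans hCP)
  · rwa [treeBody_initSegTree, (hf.isClosedMap _ (isClosed_evenFiber r)).closure_eq]

section Branching

variable {β : Type*} {S : Set (List ℕ)} {next : S → β → S} {a : S → β → ℕ}

/-- A branching scheme on a set `S` of nodes: `next t b` is a chosen extension of `t` in the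
direction `b`, and `a t b` is the entry following `t` in it, so that different directions lead to
incompatible extensions. -/
structure IsBranching (next : S → β → S) (a : S → β → ℕ) : Prop where
  prefix_next : ∀ (t : S) b, (t : List ℕ) ++ [a t b] <+: next t b
  injective : ∀ t, Function.Injective (a t)

/-- The node reached from `t₀` in a branching scheme after the first `n` directions of `x`. -/
def node (next : S → β → S) (t₀ : S) (x : ℕ → β) : ℕ → S
  | 0 => t₀
  | n + 1 => next (node next t₀ x n) (x n)

/-- The infinite branch followed from `t₀` in a branching scheme along the directions `x`. Its entry
`i` is read off `node next t₀ x (i + 1)`, which is long enough, so the default `0` never occurs. -/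
def branch (next : S → β → S) (t₀ : S) (x : ℕ → β) (i : ℕ) : ℕ :=
  (node next t₀ x (i + 1) : List ℕ).getD i 0

theorem node_congr {t₀ : S} {x y : ℕ → β} {n : ℕ} (hy : y ∈ cylinder x n) :
    node next t₀ y n = node next t₀ x n := by
  induction n with
  | zero => rfl
  | succ n ih => rw [node, node, ih (cylinder_anti x n.le_succ hy), hy n n.lt_succ_self]

theorem continuous_branch [TopologicalSpace β] [DiscreteTopology β] (t₀ : S) :
    Continuous (branch next t₀) := by
  refine continuous_pi fun i ↦ IsLocallyConstant.continuous ?_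
  refine (IsLocallyConstant.iff_eventually_eq _).2 fun x ↦ ?_
  filter_upwards [(hasBasis_nhds_cylinder x).mem_of_mem (i := i + 1) trivial] with y hy
  rw [branch, branch, node_congr hy]

namespace IsBranching

variable (h : IsBranching next a) (t₀ : S) (x : ℕ → β)
include h

theorem node_prefix_node {m n : ℕ} (hmn : m ≤ n) :
    (node next t₀ x m : List ℕ) <+: node next t₀ x n := by
  induction n, hmn using Nat.le_induction with
  | base => exact List.prefix_rfl
  | succ n _ ih => exact ih.trans ((List.prefix_append _ _).trans (h.prefix_next _ _))

theorem le_length_node (n : ℕ) : n ≤ (node next t₀ x n : List ℕ).length := by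
  induction n with
  | zero => exact Nat.zero_le _
  | succ n ih =>
    have hlen := (h.prefix_next (node next t₀ x n) (x n)).length_le
    rw [List.length_append, List.length_singleton] at hlen
    exact (Nat.succ_le_succ ih).trans hlen

theorem initSeg_branch (n : ℕ) :
    initSeg (branch next t₀ x) (node next t₀ x n : List ℕ).length = node next t₀ x n := by
  refine List.ext_getElem (by simp) fun i _ hi ↦ ?_
  have hi' : i < (node next t₀ x (i + 1) : List ℕ).length := h.le_length_node t₀ x (i + 1)
  rw [show (initSeg (branch next t₀ x) _)[i] = branch next t₀ x i by simp [initSeg], branch,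
    List.getD_eq_getElem _ _ hi']
  rcases le_total (i + 1) n with hin | hin
  · exact (h.node_prefix_node t₀ x hin).getElem hi'
  · exact ((h.node_prefix_node t₀ x hin).getElem hi).symm

theorem initSeg_branch_of_prefix {s : List ℕ} {n : ℕ} (hs : s <+: node next t₀ x n) :
    initSeg (branch next t₀ x) s.length = s := by
  rw [← h.initSeg_branch t₀ x n] at hs
  have hle : s.length ≤ (node next t₀ x n : List ℕ).length := by simpa using hs.length_le
  exact (List.prefix_of_prefix_length_le (initSeg_prefix _ hle) hs (by simp)).eq_of_length (by simp)

theorem branch_eq_of_prefix {s : List ℕ} {c n : ℕ} (hs : s ++ [c] <+: node next t₀ x n) :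
    branch next t₀ x s.length = c := by
  have hseg := h.initSeg_branch_of_prefix t₀ x hs
  rw [List.length_append, List.length_singleton, initSeg_succ] at hseg
  simpa using (List.append_inj' hseg rfl).2

theorem branch_length_node (n : ℕ) :
    branch next t₀ x (node next t₀ x n : List ℕ).length = a (node next t₀ x n) (x n) :=
  h.branch_eq_of_prefix t₀ x (n := n + 1) (h.prefix_next _ _)

theorem branch_mem_treeBody {P : Set (List ℕ)} (hP : IsTree P) (hS : S ⊆ P) :
    branch next t₀ x ∈ treeBody P := fun n ↦ by
  refine hP.mem_of_prefix ?_ (hS (node next t₀ x n).2)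
  rw [← h.initSeg_branch t₀ x n]
  exact initSeg_prefix _ (h.le_length_node t₀ x n)

theorem firstDiff_branch {x y : ℕ → β} (hxy : x ≠ y) :
    branch next t₀ x ≠ branch next t₀ y ∧ firstDiff (branch next t₀ x) (branch next t₀ y) =
      (node next t₀ x (firstDiff x y) : List ℕ).length := by
  set n := firstDiff x y
  have hnode : node next t₀ y n = node next t₀ x n :=
    (node_congr (mem_cylinder_firstDiff x y)).symm
  have hdiff : branch next t₀ x (node next t₀ x n : List ℕ).length ≠
      branch next t₀ y (node next t₀ x n : List ℕ).length := by
    rw [h.branch_length_node, ← hnode, h.branch_length_node, hnode]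
    exact (h.injective _).ne (apply_firstDiff_ne hxy)
  have hne : branch next t₀ x ≠ branch next t₀ y := fun heq ↦ hdiff (congrFun heq _)
  refine ⟨hne, le_antisymm ?_ ((mem_cylinder_iff_le_firstDiff hne _).1 ?_)⟩
  · exact not_lt.1 fun hlt ↦ hdiff (apply_eq_of_lt_firstDiff hlt)
  · rw [← initSeg_eq_initSeg, h.initSeg_branch, ← hnode, h.initSeg_branch]

theorem branch_injective : Function.Injective (branch next t₀) := fun x y hxy ↦ by
  by_contra hne
  exact (h.firstDiff_branch t₀ hne).1 hxy

theorem isProperMap_branch [TopologicalSpace β] [DiscreteTopology β] :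
    IsProperMap (branch next t₀) := by
  refine isProperMap_iff_ultrafilter.2 ⟨continuous_branch t₀, fun 𝒰 y hy ↦ ?_⟩
  have hbranch : ∀ i, ∀ᶠ x in (𝒰 : Filter (ℕ → β)), branch next t₀ x i = y i := fun i ↦ by
    simpa using tendsto_pi_nhds.1 hy i
  -- A limit along `𝒰` fixes the entry after each node, and by injectivity also the direction.
  have hdirection : ∀ n t, (∀ᶠ x in (𝒰 : Filter (ℕ → β)), node next t₀ x n = t) →
      ∃ b, ∀ᶠ x in (𝒰 : Filter (ℕ → β)), x n = b := fun n t ht ↦ by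
    have ha : ∀ᶠ x in (𝒰 : Filter (ℕ → β)), a t (x n) = y (t : List ℕ).length := by
      filter_upwards [ht, hbranch (t : List ℕ).length] with x hxt hx
      rw [← hx, ← hxt, h.branch_length_node]
    obtain ⟨x, hx⟩ := ha.exists
    exact ⟨x n, ha.mono fun x' hx' ↦ h.injective t (hx'.trans hx.symm)⟩
  have hnode : ∀ n, ∃ t, ∀ᶠ x in (𝒰 : Filter (ℕ → β)), node next t₀ x n = t := fun n ↦ by
    induction n with
    | zero => exact ⟨t₀, Eventually.of_forall fun _ ↦ rfl⟩
    | succ n ih =>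
      obtain ⟨t, ht⟩ := ih
      obtain ⟨b, hb⟩ := hdirection n t ht
      exact ⟨next t b, by filter_upwards [ht, hb] with x hxt hxb; rw [node, hxt, hxb]⟩
  choose z hz using fun n ↦ (hnode n).elim (hdirection n)
  have hlim : Tendsto id (𝒰 : Filter (ℕ → β)) (𝓝 z) :=
    tendsto_pi_nhds.2 fun n ↦ by simpa using hz n
  exact ⟨z, tendsto_nhds_unique ((continuous_branch t₀).tendsto z |>.comp hlim) hy, hlim⟩

end IsBranching

end Branching

theorem IsSacksTree.not_countable_treeBody {P : Set (List ℕ)} (hP : IsSacksTree P) :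
    ¬ (treeBody P).Countable := by
  let S := {t ∈ P | (succs P t).Nontrivial}
  have hsplit : ∀ t : S, ∃ a : Bool → ℕ, Function.Injective a ∧
      ∀ b, ∃ u : S, (t : List ℕ) ++ [a b] <+: u := fun ⟨t, _, m, hm, n, hn, hmn⟩ ↦ by
    refine ⟨fun b ↦ cond b m n, fun b c ↦ by cases b <;> cases c <;> simp [hmn, hmn.symm],
      fun b ↦ ?_⟩
    obtain ⟨u, huP, hu, hu_split⟩ := hP.2 (t ++ [cond b m n]) (by cases b; exacts [hn, hm])
    exact ⟨⟨u, huP, hu_split⟩, hu⟩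
  choose a ha next hnext using hsplit
  have hbr : IsBranching next a := ⟨hnext, ha⟩
  obtain ⟨s, hs⟩ := hP.1.1
  obtain ⟨t, htP, -, ht⟩ := hP.2 s hs
  have hrange : range (branch next ⟨t, htP, ht⟩) ⊆ treeBody P :=
    range_subset_iff.2 fun x ↦ hbr.branch_mem_treeBody _ x hP.1 (sep_subset _ _)
  intro hcount
  have hcard : #(ℕ → Bool) ≤ ℵ₀ := by
    rw [← mk_range_eq _ (hbr.branch_injective _)]
    exact (hcount.mono hrange).le_aleph0
  exact hcard.not_gt (by simpa using cantor ℵ₀)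

/-- A set of sequences is sparse if, whenever two of its members part, the larger one jumps above
the next entry of the smaller one. Every Miller tree contains the body of a Miller tree that is
sparse, while two sequences whose entries grow simultaneously never lie in a common sparse set. -/
def IsSparse (C : Set (ℕ → ℕ)) : Prop :=
  ∀ x ∈ C, ∀ y ∈ C, ∀ n, y ∈ cylinder x n → x n < y n → x (n + 1) < y n

theorem exists_strictMono_lt_of_infinite {X : Set ℕ} (hX : X.Infinite) (f : X → ℕ) :
    ∃ a : ℕ → X, StrictMono a ∧ ∀ k k', k < k' → f (a k) < a k' := by
  obtain ⟨a, -, ha⟩ := exists_seq_of_forall_finset_exists (fun _ : X ↦ True)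
    (fun i j ↦ i < j ∧ f i < j) fun s _ ↦ by
      obtain ⟨j, hjX, hj⟩ := hX.exists_gt (s.sup fun i ↦ max (i : ℕ) (f i))
      refine ⟨⟨j, hjX⟩, trivial, fun i hi ↦ ?_⟩
      exact max_lt_iff.1 <| (Finset.le_sup (f := fun i : X ↦ max (i : ℕ) (f i)) hi).trans_lt hj
  exact ⟨a, fun k k' hk ↦ (ha k k' hk).1, fun k k' hk ↦ (ha k k' hk).2⟩

theorem IsBranching.isSparse_range {S : Set (List ℕ)} {next : S → ℕ → S} {a : S → ℕ → ℕ}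
    (h : IsBranching next a) (hmono : ∀ t, StrictMono (a t))
    (hnext : ∀ t k k', k < k' → ∃ c < a t k', (t : List ℕ) ++ [a t k] ++ [c] <+: next t k)
    (t₀ : S) : IsSparse (range (branch next t₀)) := by
  rintro _ ⟨z, rfl⟩ _ ⟨w, rfl⟩ n hcyl hlt
  have hzw : z ≠ w := fun heq ↦ hlt.ne (by rw [heq])
  obtain ⟨hne, hfirst⟩ := h.firstDiff_branch t₀ hzw
  set k := firstDiff z w
  set t := node next t₀ z k
  have htw : node next t₀ w k = t := (node_congr (mem_cylinder_firstDiff z w)).symm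
  obtain rfl : n = (t : List ℕ).length := by
    rw [← hfirst]
    refine le_antisymm ?_ (not_lt.1 fun hn ↦ hlt.ne (apply_eq_of_lt_firstDiff hn))
    exact (mem_cylinder_iff_le_firstDiff hne _).1 ((mem_cylinder_comm _ _ _).1 hcyl)
  have hw : branch next t₀ w (t : List ℕ).length = a t (w k) := by
    rw [← htw]
    exact h.branch_length_node t₀ w k
  have hz : branch next t₀ z (t : List ℕ).length = a t (z k) := h.branch_length_node t₀ z k
  rw [hz, hw, (hmono t).lt_iff_lt] at hlt
  obtain ⟨c, hc, hprefix⟩ := hnext t (z k) (w k) hlt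
  have hzc := h.branch_eq_of_prefix t₀ z (n := k + 1) hprefix
  rw [List.length_append, List.length_singleton] at hzc
  rwa [hzc, hw]

theorem IsMillerTree.exists_isBranching {P : Set (List ℕ)} (hP : IsMillerTree P) :
    ∃ (S : Set (List ℕ)) (next : S → ℕ → S) (a : S → ℕ → ℕ), S ⊆ P ∧ S.Nonempty ∧
      IsBranching next a ∧ ∀ t₀, IsSparse (range (branch next t₀)) := by
  let S := {t ∈ P | (succs P t).Infinite}
  have hextend : ∀ s ∈ P, ∃ u : S, s <+: u := fun s hs ↦ by
    obtain ⟨u, huP, hsu, hu⟩ := hP.2 s hs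
    exact ⟨⟨u, huP, hu⟩, hsu⟩
  have hjump : ∀ t : S, ∀ i : succs P t, ∃ c, ∃ u : S, (t : List ℕ) ++ [(i : ℕ)] ++ [c] <+: u := by
    rintro ⟨t, ht⟩ ⟨i, hi⟩
    obtain ⟨⟨v, -, hv⟩, w, rfl⟩ := hextend _ hi
    obtain ⟨d, hd⟩ := hv.nonempty
    obtain ⟨u, hu⟩ := hextend _ hd
    obtain ⟨c, w', hw⟩ := List.exists_cons_of_ne_nil (List.concat_ne_nil d w)
    have hc : t ++ [i] ++ [c] <+: t ++ [i] ++ w ++ [d] := ⟨w', by simp [← hw]⟩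
    exact ⟨c, u, hc.trans hu⟩
  choose c ext hext using hjump
  choose a hmono hlt using fun t : S ↦ exists_strictMono_lt_of_infinite t.2.2 (c t)
  have h : IsBranching (fun t k ↦ ext t (a t k)) fun t k ↦ (a t k : ℕ) :=
    ⟨fun t k ↦ (List.prefix_append _ _).trans (hext t (a t k)),
      fun t ↦ Subtype.val_injective.comp (hmono t).injective⟩
  obtain ⟨s, hs⟩ := hP.1.1
  refine ⟨S, _, _, sep_subset _ _, ⟨_, (hextend s hs).choose.2⟩, h, h.isSparse_range hmono ?_⟩
  exact fun t k k' hk ↦ ⟨c t (a t k), hlt t k k' hk, hext t (a t k)⟩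

theorem IsBranching.isMillerTree_initSegTree {S : Set (List ℕ)} {next : S → ℕ → S}
    {a : S → ℕ → ℕ} (h : IsBranching next a) (t₀ : S) (r : ℕ → ℕ) :
    IsMillerTree (initSegTree (branch next t₀ '' evenFiber r)) := by
  refine ⟨isTree_initSegTree ((evenFiber_nonempty r).image _), ?_⟩
  rintro _ ⟨_, ⟨z, hz, rfl⟩, n, rfl⟩
  set t := node next t₀ z (2 * n + 1)
  have hnode : ∀ k, node next t₀ (Function.update z (2 * n + 1) k) (2 * n + 1) = t := fun k ↦
    node_congr (update_mem_cylinder z _ k)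
  have hsucc : ∀ k, a t k ∈ succs (initSegTree (branch next t₀ '' evenFiber r)) t := fun k ↦ by
    refine ⟨_, mem_image_of_mem _ (update_mem_evenFiber hz n k), (t : List ℕ).length + 1, ?_⟩
    have hprefix := h.prefix_next t k
    have hnext : next t k = node next t₀ (Function.update z (2 * n + 1) k) (2 * n + 2) := by
      rw [node, hnode, Function.update_self]
    rw [hnext] at hprefix
    simpa using h.initSeg_branch_of_prefix t₀ _ hprefix
  refine ⟨t, ⟨_, ⟨z, hz, rfl⟩, _, h.initSeg_branch t₀ z _⟩, ?_,
    infinite_of_injective_forall_mem (h.injective t) hsucc⟩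
  rw [← h.initSeg_branch t₀ z (2 * n + 1)]
  exact initSeg_prefix _ ((by omega : n ≤ 2 * n + 1).trans (h.le_length_node t₀ z _))

theorem IsMillerTree.exists_isMillerTree_disjoint {P : Set (List ℕ)} (hP : IsMillerTree P)
    {A : Set (ℕ → ℕ)} (hA : ∀ C, IsClosed C → IsSparse C → #(A ∩ C : Set (ℕ → ℕ)) < 𝔠) :
    ∃ Q, IsMillerTree Q ∧ Q ⊆ P ∧ Disjoint (treeBody Q) A := by
  obtain ⟨S, next, a, hSP, ⟨t₀, ht₀⟩, h, hsparse⟩ := hP.exists_isBranching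
  let f := branch next ⟨t₀, ht₀⟩
  have hclosed : IsClosedMap f := (h.isProperMap_branch _).isClosedMap
  have hAf : #(A ∩ range f : Set (ℕ → ℕ)) < #(ℕ → ℕ) := by
    simpa using hA _ hclosed.isClosed_range (hsparse _)
  obtain ⟨r, hr⟩ := exists_disjoint_image_evenFiber (h.branch_injective _) hAf
  refine ⟨_, h.isMillerTree_initSegTree ⟨t₀, ht₀⟩ r, initSegTree_subset ?_, ?_⟩
  · exact image_subset_iff.2 fun z _ ↦ h.branch_mem_treeBody _ z hP.1 hSP
  · rwa [treeBody_initSegTree, (hclosed _ (isClosed_evenFiber r)).closure_eq]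

theorem exists_strictMonoOn_mem {ι : Type*} [LinearOrder ι] (s : Finset ι) {X : ι → Set ℕ}
    (hX : ∀ i, (X i).Infinite) (B : ℕ) :
    ∃ v : ι → ℕ, (∀ i, v i ∈ X i) ∧ (∀ i, B < v i) ∧ StrictMonoOn v s := by
  induction s using Finset.induction_on_max with
  | empty =>
    choose v hvX hv using fun i ↦ (hX i).exists_gt B
    exact ⟨v, hvX, hv, by simp [StrictMonoOn]⟩
  | insert a s ha ih =>
    obtain ⟨v, hvX, hv, hmono⟩ := ih
    obtain ⟨b, hbX, hb⟩ := (hX a).exists_gt (max B (s.sup v))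
    rw [max_lt_iff] at hb
    have heq : EqOn v (Function.update v a b) s := fun i hi ↦
      (Function.update_of_ne (ha i hi).ne _ _).symm
    refine ⟨Function.update v a b, ?_, ?_, ?_⟩
    · exact (Function.forall_update_iff v fun i k ↦ k ∈ X i).2 ⟨hbX, fun i _ ↦ hvX i⟩
    · exact (Function.forall_update_iff v fun _ k ↦ B < k).2 ⟨hb.1, fun i _ ↦ hv i⟩
    · rw [Finset.coe_insert, strictMonoOn_insert_iff_of_forall_le fun i hi ↦ (ha i hi).le]
      refine ⟨fun i hi _ ↦ ?_, hmono.congr heq⟩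
      rw [Function.update_self, ← heq hi]
      exact (Finset.le_sup hi).trans_lt hb.2

theorem exists_strictAntiOn_mem {ι : Type*} [LinearOrder ι] (s : Finset ι) {X : ι → Set ℕ}
    (hX : ∀ i, (X i).Infinite) (B : ℕ) :
    ∃ v : ι → ℕ, (∀ i, v i ∈ X i) ∧ (∀ i, B < v i) ∧ StrictAntiOn v s := by
  obtain ⟨v, hvX, hv, hmono⟩ := exists_strictMonoOn_mem (ι := ιᵒᵈ) s hX B
  exact ⟨v, hvX, hv, fun i hi j hj hij ↦ hmono hj hi hij⟩

/-- The number with binary digits `z 0, …, z (n - 1)`, most significant first. It indexes the nodes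
at level `n` of the binary tree, so that the parent of the node `i` is `i / 2`. -/
def binaryIndex (z : ℕ → Bool) : ℕ → ℕ
  | 0 => 0
  | n + 1 => Nat.bit (z n) (binaryIndex z n)

theorem binaryIndex_lt (z : ℕ → Bool) (n : ℕ) : binaryIndex z n < 2 ^ n := by
  induction n with
  | zero => exact Nat.one_pos
  | succ n ih => exact Nat.bit_lt_two_pow_succ_iff.2 ih

theorem binaryIndex_succ_div_two (z : ℕ → Bool) (n : ℕ) :
    binaryIndex z (n + 1) / 2 = binaryIndex z n := Nat.bit_div_two _ _

theorem continuous_binaryIndex (n : ℕ) : Continuous fun z ↦ binaryIndex z n := by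
  induction n with
  | zero => exact continuous_const
  | succ n ih =>
    exact (continuous_of_discreteTopology (f := fun p : Bool × ℕ ↦ Nat.bit p.1 p.2)).comp
      ((continuous_apply n).prodMk ih)

theorem binaryIndex_lt_binaryIndex_of_le {z w : ℕ → Bool} {m n : ℕ} (hmn : m ≤ n)
    (h : binaryIndex z m < binaryIndex w m) : binaryIndex z n < binaryIndex w n := by
  induction n, hmn using Nat.le_induction with
  | base => exact h
  | succ n _ ih =>
    rw [binaryIndex, binaryIndex, Nat.bit_val, Nat.bit_val]
    have hz := Bool.toNat_le (z n)
    omega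

theorem exists_binaryIndex_ne {z w : ℕ → Bool} (hzw : z ≠ w) :
    ∃ n, binaryIndex z n ≠ binaryIndex w n := by
  contrapose! hzw
  exact funext fun n ↦ by simpa [binaryIndex] using congrArg Nat.bodd (hzw (n + 1))

theorem eventually_binaryIndex_lt_or_gt {z w : ℕ → Bool} (hzw : z ≠ w) :
    (∀ᶠ n in atTop, binaryIndex z n < binaryIndex w n) ∨
      ∀ᶠ n in atTop, binaryIndex w n < binaryIndex z n := by
  obtain ⟨m, hm⟩ := exists_binaryIndex_ne hzw
  exact hm.lt_or_gt.imp
    (fun h ↦ eventually_atTop.2 ⟨m, fun n hn ↦ binaryIndex_lt_binaryIndex_of_le hn h⟩)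
    fun h ↦ eventually_atTop.2 ⟨m, fun n hn ↦ binaryIndex_lt_binaryIndex_of_le hn h⟩

theorem IsCompleteLaverTree.exists_level {T : Set (List ℕ)} (hT : IsCompleteLaverTree T)
    (t : ℕ → T) (n : ℕ) (p : Prop) :
    ∃ v : ℕ → ℕ, (∀ i, (t (i / 2) : List ℕ) ++ [v i] ∈ T) ∧
      (∀ i, ∀ j < n, (t j : List ℕ).sum < v i) ∧
      (p → StrictMonoOn v (Iio (2 * n))) ∧ (¬ p → StrictAntiOn v (Iio (2 * n))) := by
  have hX : ∀ i, (succs T (t (i / 2))).Infinite := fun i ↦ hT.2 _ (t _).2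
  have hB : ∀ {k}, (Finset.range n).sup (fun j ↦ (t j : List ℕ).sum) < k →
      ∀ j < n, (t j : List ℕ).sum < k := fun hk j hj ↦
    (Finset.le_sup (f := fun j ↦ (t j : List ℕ).sum) (Finset.mem_range.2 hj)).trans_lt hk
  by_cases hp : p
  · obtain ⟨v, hvX, hv, hmono⟩ := exists_strictMonoOn_mem (Finset.range (2 * n)) hX _
    exact ⟨v, hvX, fun i ↦ hB (hv i), fun _ ↦ by simpa using hmono, fun h ↦ (h hp).elim⟩
  · obtain ⟨v, hvX, hv, hanti⟩ := exists_strictAntiOn_mem (Finset.range (2 * n)) hX _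
    exact ⟨v, hvX, fun i ↦ hB (hv i), fun h ↦ (hp h).elim, fun _ ↦ by simpa using hanti⟩

theorem IsCompleteLaverTree.exists_coding_map {T : Set (List ℕ)} (hT : IsCompleteLaverTree T)
    (p : ℕ → Prop) :
    ∃ F : (ℕ → Bool) → ℕ → ℕ, Continuous F ∧ (∀ z, F z ∈ treeBody T) ∧
      (∀ z w n, F z n < F w (n + 1)) ∧
      ∀ z w n, binaryIndex z (n + 1) < binaryIndex w (n + 1) →
        (p n → F z n < F w n) ∧ (¬ p n → F w n < F z n) := by
  choose v hvT hsum hmono hanti using fun n (t : ℕ → T) ↦ hT.exists_level t (2 ^ n) (p n)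
  obtain ⟨t, ht_zero, ht_succ⟩ : ∃ t : ℕ → ℕ → T, (∀ i, (t 0 i : List ℕ) = []) ∧
      ∀ n i, (t (n + 1) i : List ℕ) = (t n (i / 2) : List ℕ) ++ [v n (t n) i] :=
    ⟨fun n ↦ n.rec (fun _ ↦ ⟨[], hT.1.nil_mem⟩)
      fun n t i ↦ ⟨(t (i / 2) : List ℕ) ++ [v n t i], hvT n t i⟩, fun _ ↦ rfl, fun _ _ ↦ rfl⟩
  let F : (ℕ → Bool) → ℕ → ℕ := fun z n ↦ v n (t n) (binaryIndex z (n + 1))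
  have hinit : ∀ z n, initSeg (F z) n = t n (binaryIndex z n) := fun z n ↦ by
    induction n with
    | zero => exact (ht_zero _).symm
    | succ n ih => rw [initSeg_succ, ih, ht_succ, binaryIndex_succ_div_two]
  have hindex : ∀ z n, binaryIndex z (n + 1) ∈ Iio (2 * 2 ^ n) := fun z n ↦ by
    simpa [pow_succ'] using binaryIndex_lt z (n + 1)
  refine ⟨F, ?_, fun z ↦ mem_treeBody.2 fun n ↦ ?_, fun z w n ↦ ?_,
    fun z w n hzw ↦ ⟨fun hp ↦ ?_, fun hp ↦ ?_⟩⟩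
  · exact continuous_pi fun n ↦ continuous_of_discreteTopology.comp (continuous_binaryIndex _)
  · exact hinit z n ▸ (t n _).2
  · refine lt_of_le_of_lt ?_ (hsum (n + 1) (t (n + 1)) _ _ (binaryIndex_lt z (n + 1)))
    exact List.le_sum_of_mem (by simp [ht_succ, F])
  · exact hmono n (t n) hp (hindex z n) (hindex w n) hzw
  · exact hanti n (t n) hp (hindex z n) (hindex w n) hzw

/-- A closed set of `𝔠` branches of `T` in which every two branches encode the tree `T`: the sign of
`x m - y m` eventually tells, up to a global change of sign, whether the list numbered
`m.unpair.1` is in `T`. Since `m ↦ m.unpair.1` takes each value infinitely often, every list is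
consulted at arbitrarily late places. The entries of all branches moreover grow simultaneously. -/
structure IsCodingSet (T : Set (List ℕ)) (Z : Set (ℕ → ℕ)) : Prop where
  subset_treeBody : Z ⊆ treeBody T
  isClosed : IsClosed Z
  mk_eq_continuum : #Z = 𝔠
  lt_succ : ∀ x ∈ Z, ∀ y ∈ Z, ∀ n, x n < y (n + 1)
  eventually_lt_iff : ∀ x ∈ Z, ∀ y ∈ Z, x ≠ y → ∃ s : Prop, ∀ᶠ m in atTop,
    (x m < y m ↔ (s ↔ Denumerable.ofNat (List ℕ) m.unpair.1 ∈ T))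

theorem IsCompleteLaverTree.exists_isCodingSet {T : Set (List ℕ)} (hT : IsCompleteLaverTree T) :
    ∃ Z, IsCodingSet T Z := by
  obtain ⟨F, hF, hFT, hlt, hsign⟩ :=
    hT.exists_coding_map fun m ↦ Denumerable.ofNat (List ℕ) m.unpair.1 ∈ T
  have hsign_iff : ∀ {z w}, z ≠ w → ∃ s : Prop, ∀ᶠ m in atTop, F z m ≠ F w m ∧
      (F z m < F w m ↔ (s ↔ Denumerable.ofNat (List ℕ) m.unpair.1 ∈ T)) := fun {z w} hzw ↦ by
    rcases eventually_binaryIndex_lt_or_gt hzw with h | h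
    · refine ⟨True, ((tendsto_add_atTop_nat 1).eventually h).mono fun m hm ↦ ?_⟩
      have hcmp := hsign z w m hm
      grind
    · refine ⟨False, ((tendsto_add_atTop_nat 1).eventually h).mono fun m hm ↦ ?_⟩
      have hcmp := hsign w z m hm
      grind
  have hinj : Function.Injective F := fun z w heq ↦ by
    by_contra hzw
    obtain ⟨s, hs⟩ := hsign_iff hzw
    obtain ⟨m, hm, -⟩ := hs.exists
    exact hm (congrFun heq m)
  refine ⟨range F, range_subset_iff.2 hFT, (isCompact_range hF).isClosed, ?_, ?_, ?_⟩
  · simp [mk_range_eq F hinj]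
  · rintro _ ⟨z, rfl⟩ _ ⟨w, rfl⟩ n
    exact hlt z w n
  · rintro _ ⟨z, rfl⟩ _ ⟨w, rfl⟩ hzw
    obtain ⟨s, hs⟩ := hsign_iff (ne_of_apply_ne F hzw)
    exact ⟨s, hs.mono fun _ ↦ And.right⟩

theorem frequently_ofNat_unpair_fst {α : Type*} [Denumerable α] (l : α) :
    ∃ᶠ m : ℕ in atTop, Denumerable.ofNat α m.unpair.1 = l :=
  frequently_atTop.2 fun n ↦ ⟨Nat.pair (Encodable.encode l) n, Nat.right_le_pair _ _, by simp⟩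

theorem IsCodingSet.subsingleton_inter {T T' : Set (List ℕ)} {Z Z' : Set (ℕ → ℕ)}
    (hZ : IsCodingSet T Z) (hZ' : IsCodingSet T' Z') (hT : IsTree T) (hT' : IsTree T')
    (hne : T ≠ T') : (Z ∩ Z').Subsingleton := by
  rintro x ⟨hxZ, hxZ'⟩ y ⟨hyZ, hyZ'⟩
  by_contra hxy
  obtain ⟨s, hs⟩ := hZ.eventually_lt_iff x hxZ y hyZ hxy
  obtain ⟨s', hs'⟩ := hZ'.eventually_lt_iff x hxZ' y hyZ' hxy
  have hcode : ∀ l, (s ↔ l ∈ T) ↔ (s' ↔ l ∈ T') := fun l ↦ by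
    obtain ⟨m, rfl, hm, hm'⟩ := ((frequently_ofNat_unpair_fst l).and_eventually (hs.and hs')).exists
    exact hm.symm.trans hm'
  -- Both trees contain the empty list, which fixes the sign.
  have hsign : s ↔ s' := by simpa [hT.nil_mem, hT'.nil_mem] using hcode []
  exact hne (Set.ext fun l ↦ by have hl := hcode l; tauto)

theorem IsCodingSet.subsingleton_inter_of_isSparse {T : Set (List ℕ)} {Z C : Set (ℕ → ℕ)}
    (hZ : IsCodingSet T Z) (hC : IsSparse C) : (Z ∩ C).Subsingleton := by
  rintro x ⟨hxZ, hxC⟩ y ⟨hyZ, hyC⟩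
  by_contra hxy
  have hcyl : y ∈ cylinder x (firstDiff x y) := fun _ hi ↦ (apply_eq_of_lt_firstDiff hi).symm
  rcases (apply_firstDiff_ne hxy).lt_or_gt with hlt | hlt
  · exact (hZ.lt_succ y hyZ x hxZ _).not_gt (hC x hxC y hyC _ hcyl hlt)
  · refine (hZ.lt_succ x hxZ y hyZ _).not_gt (hC y hyC x hxC _ ?_ hlt)
    exact (mem_cylinder_comm _ _ _).1 hcyl

theorem not_subset_iUnion_of_countable_inter {ι α : Type u} {κ : Cardinal.{u}} (hκ : ℵ₀ < κ)
    (hι : #ι < κ) {Z : Set α} {D : ι → Set α} (hZ : κ ≤ #Z) (hD : ∀ i, (Z ∩ D i).Countable) :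
    ¬ Z ⊆ ⋃ i, D i := fun hsub ↦ by
  have hcover : Z ⊆ ⋃ i, Z ∩ D i := by rw [← inter_iUnion]; exact subset_inter subset_rfl hsub
  have hsmall : #(⋃ i, Z ∩ D i) < κ := calc
    #(⋃ i, Z ∩ D i) ≤ #ι * ⨆ i, #(Z ∩ D i : Set α) := mk_iUnion_le _
    _ ≤ #ι * ℵ₀ := mul_le_mul_right (ciSup_le' fun i ↦ (hD i).le_aleph0) _
    _ < κ := mul_lt_of_lt hκ.le hι hκ
  exact (hZ.trans (mk_le_mk_of_subset hcover)).not_gt hsmall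

theorem exists_transversal {ι J α : Type u} {κ : Cardinal.{u}} (hκ : ℵ₀ < κ) (hι : #ι ≤ κ)
    (hJ : #J ≤ κ) {Z : ι → Set α} {W : J → Set α} (hZ : ∀ i, κ ≤ #(Z i))
    (hZZ : Pairwise fun i i' ↦ (Z i ∩ Z i').Countable) (hZW : ∀ i j, (Z i ∩ W j).Countable) :
    ∃ A : Set α, (∀ i, (A ∩ Z i).Nonempty ∧ #(A ∩ Z i : Set α) < κ) ∧
      ∀ j, #(A ∩ W j : Set α) < κ := by
  obtain ⟨_, _, hord⟩ := exists_ord_eq_type_lt (ι ⊕ J)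
  have hIio : ∀ k : ι ⊕ J, #(Iio k) < κ := fun k ↦
    (mk_Iio_lt k hord).trans_le (by simpa using add_le_of_le hκ.le hι hJ)
  have hIic : ∀ k : ι ⊕ J, #(Iic k) < κ := fun k ↦ by
    rw [← Iio_insert]
    exact mk_insert_le.trans_lt (add_lt_of_lt hκ.le (hIio k) (one_lt_aleph0.trans hκ))
  let D : ι ⊕ J → Set α := Sum.elim Z W
  have hZD : ∀ i k, k < Sum.inl i → (Z i ∩ D k).Countable := fun i k hk ↦ by
    rcases k with i' | j
    · exact hZZ fun heq ↦ hk.ne (congrArg Sum.inl heq.symm)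
    · exact hZW i j
  have hpick : ∀ i, ∃ x ∈ Z i, ∀ k < Sum.inl i, x ∉ D k := fun i ↦ by
    obtain ⟨x, hxZ, hx⟩ := not_subset.1 <| not_subset_iUnion_of_countable_inter hκ
      (hIio (Sum.inl i)) (hZ i) (D := fun k ↦ D k) fun k ↦ hZD i k k.2
    exact ⟨x, hxZ, fun k hk hxk ↦ hx (mem_iUnion.2 ⟨⟨k, hk⟩, hxk⟩)⟩
  choose x hxZ hxD using hpick
  have hsmall : ∀ k, #(range x ∩ D k : Set α) < κ := fun k ↦ by
    have hsub : range x ∩ D k ⊆ x '' (Sum.inl ⁻¹' Iic k) := by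
      rintro _ ⟨⟨i, rfl⟩, hi⟩
      exact mem_image_of_mem x (not_lt.1 fun hk ↦ hxD i k hk hi)
    refine ((mk_le_mk_of_subset hsub).trans mk_image_le).trans_lt ?_
    exact (mk_preimage_of_injective _ _ Sum.inl_injective).trans_lt (hIic k)
  exact ⟨range x, fun i ↦ ⟨⟨x i, mem_range_self i, hxZ i⟩, hsmall (Sum.inl i)⟩,
    fun j ↦ hsmall (Sum.inr j)⟩

theorem exists_small_transversal :
    ∃ A : Set (ℕ → ℕ),
      (∀ T, IsCompleteLaverTree T → (A ∩ treeBody T).Nonempty ∧ ¬ treeBody T ⊆ A) ∧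
      (∀ P, ¬ (treeBody P).Countable → ∃ C ⊆ treeBody P, IsClosed C ∧ ¬ C.Countable ∧
        #(A ∩ C : Set (ℕ → ℕ)) < 𝔠) ∧
      ∀ C, IsClosed C → IsSparse C → #(A ∩ C : Set (ℕ → ℕ)) < 𝔠 := by
  choose Z hZ using fun T : {T // IsCompleteLaverTree T} ↦ T.2.exists_isCodingSet
  have hcard : ∀ q : Set (List ℕ) → Prop, #{P // q P} ≤ 𝔠 := fun q ↦
    (mk_subtype_le q).trans (by simp [mk_set])
  obtain ⟨A, hAZ, hAW⟩ := exists_transversal aleph0_lt_continuum (hcard _) (hcard _)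
    (W := fun P : {P // ∀ T, (Z T ∩ treeBody P).Countable} ↦ treeBody P)
    (fun T ↦ (hZ T).mk_eq_continuum.ge)
    (fun T T' hne ↦ ((hZ T).subsingleton_inter (hZ T') T.2.1 T'.2.1
      (Subtype.coe_injective.ne hne)).countable)
    fun T P ↦ P.2 T
  refine ⟨A, fun T hT ↦ ⟨?_, fun hTA ↦ ?_⟩, fun P hP ↦ ?_, fun C hC hsparse ↦ ?_⟩
  · exact (hAZ ⟨T, hT⟩).1.mono (inter_subset_inter_right A (hZ _).subset_treeBody)
  · have hsmall := (hAZ ⟨T, hT⟩).2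
    rw [inter_eq_right.2 ((hZ _).subset_treeBody.trans hTA), (hZ _).mk_eq_continuum] at hsmall
    exact hsmall.false
  · by_cases hW : ∀ T, (Z T ∩ treeBody P).Countable
    · exact ⟨_, subset_rfl, isClosed_treeBody P, hP, hAW ⟨P, hW⟩⟩
    · obtain ⟨T, hT⟩ := not_forall.1 hW
      refine ⟨_, inter_subset_right, (hZ T).isClosed.inter (isClosed_treeBody P), hT, ?_⟩
      exact (mk_le_mk_of_subset (inter_subset_inter_right A inter_subset_left)).trans_lt (hAZ T).2
  · have hbody : treeBody (initSegTree C) = C := by rw [treeBody_initSegTree, hC.closure_eq]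
    have hW : ∀ T, (Z T ∩ treeBody (initSegTree C)).Countable := fun T ↦ by
      rw [hbody]
      exact ((hZ T).subsingleton_inter_of_isSparse hsparse).countable
    exact hbody ▸ hAW ⟨_, hW⟩

theorem isCompleteLaverTree_univ : IsCompleteLaverTree Set.univ :=
  ⟨⟨univ_nonempty, fun _ _ _ ↦ trivial⟩, fun _ _ ↦ infinite_univ⟩

theorem tmeasurable_of_mem_treeIdeal {𝕋 : Set (Set (List ℕ))} {A : Set (ℕ → ℕ)}
    (hA : A ∈ treeIdeal 𝕋) : TMeasurable 𝕋 A := fun P hP ↦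
  let ⟨Q, hQ, hQP, hQA⟩ := hA P hP
  ⟨Q, hQ, hQP, Or.inr hQA⟩

theorem stmt3_general :
    ∃ A : Set (ℕ → ℕ), A ∈ treeIdeal {T | IsMillerTree T} ∧ A ∈ treeIdeal {T | IsSacksTree T} ∧
      ¬ TMeasurable {T | IsCompleteLaverTree T} A := by
  obtain ⟨A, hlaver, hsacks, hmiller⟩ := exists_small_transversal
  refine ⟨A, fun P hP ↦ ?_, fun P hP ↦ ?_, fun hmeas ↦ ?_⟩
  · obtain ⟨Q, hQ, hQP, hQA⟩ := IsMillerTree.exists_isMillerTree_disjoint hP hmiller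
    exact ⟨Q, hQ, hQP, hQA.inter_eq⟩
  · obtain ⟨C, hCP, hC, hunc, hCA⟩ := hsacks P hP.not_countable_treeBody
    obtain ⟨Q, hQ, hQP, hQA⟩ := exists_isSacksTree_disjoint hC hunc hCP hCA
    exact ⟨Q, hQ, hQP, hQA.inter_eq⟩
  · obtain ⟨T, hT, -, hTA | hTA⟩ := hmeas Set.univ isCompleteLaverTree_univ
    · exact (hlaver T hT).2 hTA
    · exact (hlaver T hT).1.ne_empty (inter_comm A _ ▸ hTA)

/-- there is an m-measurable, cl-nonmeasurable set, and an
s-measurable, cl-nonmeasurable set. -/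
theorem stmt3 :
    (∃ A : Set (ℕ → ℕ),
      TMeasurable {T | IsMillerTree T} A ∧ ¬ TMeasurable {T | IsCompleteLaverTree T} A) ∧
    (∃ A : Set (ℕ → ℕ),
      TMeasurable {T | IsSacksTree T} A ∧ ¬ TMeasurable {T | IsCompleteLaverTree T} A) := by
  obtain ⟨A, hm, hs, hcl⟩ := stmt3_general
  exact ⟨⟨A, tmeasurable_of_mem_treeIdeal hm, hcl⟩, ⟨A, tmeasurable_of_mem_treeIdeal hs, hcl⟩⟩
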